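/- The map a ⊳ m = a₍₁₎ m S_A(a₍₂₎) (a ∈ A, m ∈ M, using the comultiplication Δ_A and antipode S_A of the weak Hopf algebra A) takes values in M and defines a left action of A on M making M a left A-module algebra; moreover, the invariant subalgebra M^A equals N. -/

import Mathlib

/-!
The whole theorem follows from the closed form `a ▷ m = λ⁻¹ E_M(a m e₁)`, equivalently
`(a ▷ m) e₁ = a m e₁` with `a ▷ m ∈ M` (`D2S.act`, `D2S.act_e1`). In this form `▷` is visibly a
module action, elements of `U = A ∩ M` act by left multiplication, and `e₁` acts as the
conditional expectation `E`, so that an invariant element equals its own image under `E` and lies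
in `N`.

To compare `a₍₁₎ m S_A(a₍₂₎)` with the closed form, `Δ_A` and `S_A` are made explicit.

* Elements of `M₁` (indeed of `M₂`) are determined by left multiplication on `M e₁`
  (`D2S.ext_e1`), and right `N`-linear endomorphisms `α` of `M` are realised by
  `∑ α(xᵢ) e₁ yᵢ ∈ M₁` (`D2S.op_e1`). In particular there is an anti-isomorphism `σ : V → U` with
  `v e₁ = σ(v) e₁`; the symmetry of `E` gives also `e₁ v = e₁ σ(v)` (`D2S.e1_sig`).
* By the symmetric product assumption, `P(Z) = ∑ xᵢ Z yᵢ` is, up to the factor `λ`, the trace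
  preserving expectation `C → B` (`D2S.T_P`). It yields explicit dual bases for the pairing of
  `A` and `B` (`D2S.pair_dual`), so identities in `A` and `A ⊗ A` may be tested against `B`.
* Testing in this way, `Δ_A(a) = ∑ f⁽¹⁾ aʲ ⊗ σ(f⁽²⁾) wⱼ`, where `aʲ ▷ m = E_M(a m zⱼ)`
  (`D2S.cop_pair`, `D2H.ΔA_eq`), and `S_A(a) = w⁻¹ S₀(a) w`, where
  `S₀(a) ▷ m = λ⁻¹ E_M(e₁ m a)` (`D2S.T_S0`, `D2H.SA_eq`).

After substitution, the legs of `a₍₁₎ m S_A(a₍₂₎)` form the dual bases tensor of the trace on `A`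
with its factors in the reverse order. This tensor is symmetric (`D2S.A_swap`), and once the
factors are exchanged the sum collapses by the dual bases property of `zⱼ, wⱼ`
(`D2S.sum_act`). The measuring axiom is the expansion `a m = ∑ E_M(a m zⱼ) wⱼ`. The unit axiom
and the description of the invariants use `Δ_A(1) = ∑ f⁽¹⁾ ⊗ σ(f⁽²⁾)` (`D2S.cop_one`) and the
resulting formula `a ↦ a ▷ 1` for the target counit of `A` (`D2S.counit_sum`).
-/

open scoped TensorProduct
open TensorProduct

/-- A symmetric Markov extension `N ⊆ M` of `k`-algebras satisfying the symmetric
product and weak irreducibility assumptions, together with its Jones tower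
`N ⊆ M ⊆ M₁ ⊆ M₂` (the ambient algebra `R` plays the role of `M₂`), the
normalized trace `T = T₂` and the depth two conditions. -/
structure D2 (k : Type*) [Field k] (R : Type*) [Ring R] [Algebra k R] where
  N : Subalgebra k R
  M : Subalgebra k R
  M1 : Subalgebra k R
  hNM : N ≤ M
  hMM1 : M ≤ M1
  E : R →ₗ[k] R
  EM : R →ₗ[k] R
  EM1 : R →ₗ[k] R
  lam : k
  lam_ne : lam ≠ 0
  e1 : R
  e2 : R
  T : R →ₗ[k] k
  -- Markov extension data for E : M → N
  nE : ℕ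
  xb : Fin nE → R
  yb : Fin nE → R
  hxb : ∀ i, xb i ∈ M
  hyb : ∀ i, yb i ∈ M
  hE_mem : ∀ x ∈ M, E x ∈ N
  hE_one : E 1 = 1
  hE_left : ∀ n ∈ N, ∀ x ∈ M, E (n * x) = n * E x
  hE_right : ∀ n ∈ N, ∀ x ∈ M, E (x * n) = E x * n
  hdual1 : ∀ m ∈ M, ∑ i, E (m * xb i) * yb i = m
  hdual2 : ∀ m ∈ M, ∑ i, xb i * E (yb i * m) = m
  hindex : ∑ i, xb i * yb i = lam⁻¹ • (1 : R)
  hindex' : ∑ i, yb i * xb i = lam⁻¹ • (1 : R)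
  -- the normalized trace (T₂ on M₂ = R; it restricts to T on N, T₀ on M, T₁ on M₁)
  hT_one : T 1 = 1
  hT_tr : ∀ x y : R, T (x * y) = T (y * x)
  hTE : ∀ x ∈ M, T (E x) = T x
  hTEM : ∀ x ∈ M1, T (EM x) = T x
  hTEM1 : ∀ x : R, T (EM1 x) = T x
  -- symmetry of the Markov extension: E u = u E for all u ∈ U = C_M(N)
  hsymm : ∀ u ∈ M, (∀ y ∈ N, u * y = y * u) → ∀ x ∈ M, E (u * x) = E (x * u)
  -- the basic construction M₁ = M e₁ M
  he1_mem : e1 ∈ M1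
  he1_idem : e1 * e1 = e1
  he1_N : ∀ y ∈ N, e1 * y = y * e1
  hM1_gen : M1.toSubmodule = Submodule.span k {z : R | ∃ m ∈ M, ∃ m' ∈ M, z = m * e1 * m'}
  hEM_mem : ∀ x ∈ M1, EM x ∈ M
  hEM_one : EM 1 = 1
  hEM_left : ∀ m ∈ M, ∀ x ∈ M1, EM (m * x) = m * EM x
  hEM_right : ∀ m ∈ M, ∀ x ∈ M1, EM (x * m) = EM x * m
  hEM_e1 : ∀ m ∈ M, ∀ m' ∈ M, EM (m * e1 * m') = lam • (m * m')
  he1_jones : ∀ x ∈ M, e1 * x * e1 = e1 * E x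
  he1_jones' : ∀ x ∈ M, e1 * E x = E x * e1
  -- the iterated basic construction M₂ = M₁ e₂ M₁ (M₂ = R is the ambient algebra)
  he2_idem : e2 * e2 = e2
  he2_M : ∀ m ∈ M, e2 * m = m * e2
  hM2_gen : (⊤ : Submodule k R) = Submodule.span k {z : R | ∃ x ∈ M1, ∃ y ∈ M1, z = x * e2 * y}
  hEM1_mem : ∀ x : R, EM1 x ∈ M1
  hEM1_one : EM1 1 = 1
  hEM1_left : ∀ m ∈ M1, ∀ x : R, EM1 (m * x) = m * EM1 x
  hEM1_right : ∀ m ∈ M1, ∀ x : R, EM1 (x * m) = EM1 x * m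
  hEM1_e2 : ∀ x ∈ M1, ∀ y ∈ M1, EM1 (x * e2 * y) = lam • (x * y)
  he2_jones : ∀ x ∈ M1, e2 * x * e2 = e2 * EM x
  he2_jones' : ∀ x ∈ M1, e2 * EM x = EM x * e2
  -- braid-like relations and Pimsner-Popa relations
  hbraid1 : e1 * e2 * e1 = lam • e1
  hbraid2 : e2 * e1 * e2 = lam • e2
  hPP1 : ∀ x ∈ M1, x * e1 = lam⁻¹ • (EM (x * e1) * e1)
  hPP1' : ∀ x ∈ M1, e1 * x = lam⁻¹ • (e1 * EM (e1 * x))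
  hPP2 : ∀ x : R, x * e2 = lam⁻¹ • (EM1 (x * e2) * e2)
  hPP2' : ∀ x : R, e2 * x = lam⁻¹ • (e2 * EM1 (e2 * x))
  -- weak irreducibility: U = C_M(N) is Kanzaki separable with symmetric
  -- separability element ∑ sp i ⊗ sq i, and T₀ = T|U is non-degenerate on U
  nS : ℕ
  sp : Fin nS → R
  sq : Fin nS → R
  hsp : ∀ i, sp i ∈ M ∧ ∀ y ∈ N, sp i * y = y * sp i
  hsq : ∀ i, sq i ∈ M ∧ ∀ y ∈ N, sq i * y = y * sq i
  hsep_one : ∑ i, sp i * sq i = 1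
  hsep_cas : ∀ u ∈ M, (∀ y ∈ N, u * y = y * u) →
      ∑ i, (u * sp i) ⊗ₜ[k] sq i = ∑ i, sp i ⊗ₜ[k] (sq i * u)
  hsep_symm : ∑ i, sp i ⊗ₜ[k] sq i = ∑ i, sq i ⊗ₜ[k] sp i
  hU_nondeg : ∀ u ∈ M, (∀ y ∈ N, u * y = y * u) →
      (∀ u' ∈ M, (∀ y ∈ N, u' * y = y * u') → T (u * u') = 0) → u = 0
  -- depth two conditions
  nA : ℕ
  zb : Fin nA → R
  wb : Fin nA → R
  hzb : ∀ j, zb j ∈ M1 ∧ ∀ y ∈ N, zb j * y = y * zb j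
  hwb : ∀ j, wb j ∈ M1 ∧ ∀ y ∈ N, wb j * y = y * wb j
  hdualA1 : ∀ x ∈ M1, ∑ j, EM (x * zb j) * wb j = x
  hdualA2 : ∀ x ∈ M1, ∑ j, zb j * EM (wb j * x) = x
  nB : ℕ
  ub : Fin nB → R
  vb : Fin nB → R
  hub : ∀ i, ∀ y ∈ M, ub i * y = y * ub i
  hvb : ∀ i, ∀ y ∈ M, vb i * y = y * vb i
  hdualB1 : ∀ x : R, ∑ i, EM1 (x * ub i) * vb i = x
  hdualB2 : ∀ x : R, ∑ i, ub i * EM1 (vb i * x) = x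

namespace D2

variable {k : Type*} [Field k] {R : Type*} [Ring R] [Algebra k R]

/-- `U = C_M(N)`. -/
def U (D : D2 k R) : Subalgebra k R := D.M ⊓ Subalgebra.centralizer k (D.N : Set R)

/-- `V = C_{M₁}(M)`. -/
def V (D : D2 k R) : Subalgebra k R := D.M1 ⊓ Subalgebra.centralizer k (D.M : Set R)

/-- `W = C_{M₂}(M₁)`. -/
def W (D : D2 k R) : Subalgebra k R := Subalgebra.centralizer k (D.M1 : Set R)

/-- `A = C_{M₁}(N)`. -/
def A (D : D2 k R) : Subalgebra k R := D.M1 ⊓ Subalgebra.centralizer k (D.N : Set R)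

/-- `B = C_{M₂}(M)`. -/
def B (D : D2 k R) : Subalgebra k R := Subalgebra.centralizer k (D.M : Set R)

/-- `C = C_{M₂}(N)`. -/
def C (D : D2 k R) : Subalgebra k R := Subalgebra.centralizer k (D.N : Set R)

end D2
/-- Extension of the depth two setting by the symmetric separability element
`f = ∑ f1 i ⊗ f2 i` of `V = C_{M₁}(M)` and the invertible central element `w` of `V`
such that `f⁽¹⁾ ⊗ w f⁽²⁾` is the dual bases tensor of the trace `T` on `V`. -/
structure D2S (k : Type*) [Field k] (R : Type*) [Ring R] [Algebra k R] extends D2 k R where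
  nV : ℕ
  f1 : Fin nV → R
  f2 : Fin nV → R
  hf1 : ∀ i, f1 i ∈ M1 ∧ ∀ y ∈ M, f1 i * y = y * f1 i
  hf2 : ∀ i, f2 i ∈ M1 ∧ ∀ y ∈ M, f2 i * y = y * f2 i
  hf_one : ∑ i, f1 i * f2 i = 1
  hf_cas : ∀ v ∈ M1, (∀ y ∈ M, v * y = y * v) →
      ∑ i, (v * f1 i) ⊗ₜ[k] f2 i = ∑ i, f1 i ⊗ₜ[k] (f2 i * v)
  hf_symm : ∑ i, f1 i ⊗ₜ[k] f2 i = ∑ i, f2 i ⊗ₜ[k] f1 i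
  w : R
  winv : R
  hw_mem : w ∈ M1 ∧ ∀ y ∈ M, w * y = y * w
  hwinv_mem : winv ∈ M1 ∧ ∀ y ∈ M, winv * y = y * winv
  hw_inv : w * winv = 1 ∧ winv * w = 1
  hw_central : ∀ v ∈ M1, (∀ y ∈ M, v * y = y * v) → w * v = v * w
  hw_def : w * (∑ i, T (f2 i) • f1 i) = 1
  hw_dual : ∀ v ∈ M1, (∀ y ∈ M, v * y = y * v) → ∑ i, T (v * (w * f2 i)) • f1 i = v
/-- Extension of the depth two setting by the comultiplication `Δ`, the counit
(given by `ε(b) = ⟨1, b⟩`) and the antipode `S` on `B = C_{M₂}(M)`, characterized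
through the non-degenerate pairing `⟨a, b⟩ = λ⁻² T(a e₂ e₁ w b)` of `A` and `B`. -/
structure D2H (k : Type*) [Field k] (R : Type*) [Ring R] [Algebra k R] extends D2S k R where
  Δ : R →ₗ[k] R ⊗[k] R
  S : R →ₗ[k] R
  hΔ_mem : ∀ b, (∀ y ∈ M, b * y = y * b) →
      Δ b ∈ Submodule.span k {z : R ⊗[k] R |
        ∃ b1, (∀ y ∈ M, b1 * y = y * b1) ∧ ∃ b2, (∀ y ∈ M, b2 * y = y * b2) ∧
          z = b1 ⊗ₜ[k] b2}
  hΔ_def : ∀ a1 ∈ M1, (∀ y ∈ N, a1 * y = y * a1) →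
    ∀ a2 ∈ M1, (∀ y ∈ N, a2 * y = y * a2) →
    ∀ b, (∀ y ∈ M, b * y = y * b) →
    ∀ (m : ℕ) (b1 b2 : Fin m → R), Δ b = ∑ i, b1 i ⊗ₜ[k] b2 i →
      ∑ i, (lam⁻¹ ^ 2 * T (a1 * e2 * e1 * w * b1 i)) *
          (lam⁻¹ ^ 2 * T (a2 * e2 * e1 * w * b2 i))
        = lam⁻¹ ^ 2 * T (a1 * a2 * e2 * e1 * w * b)
  hS_mem : ∀ b, (∀ y ∈ M, b * y = y * b) → ∀ y ∈ M, S b * y = y * S b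
  hS_bijOn : Set.BijOn S {b : R | ∀ y ∈ M, b * y = y * b} {b : R | ∀ y ∈ M, b * y = y * b}
  hS_def : ∀ a ∈ M1, (∀ y ∈ N, a * y = y * a) →
    ∀ b, (∀ y ∈ M, b * y = y * b) →
      lam⁻¹ ^ 2 * T (a * e2 * e1 * w * b) = lam⁻¹ ^ 2 * T (S b * e1 * e2 * w * a)

namespace D2H

variable {k : Type*} [Field k] {R : Type*} [Ring R] [Algebra k R]

/-- The duality pairing `⟨a, b⟩ = λ⁻² T(a e₂ e₁ w b)`. -/
def pr (D : D2H k R) (a b : R) : k := D.lam⁻¹ ^ 2 * D.T (a * D.e2 * D.e1 * D.w * b)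

/-- The counit `ε(b) = ⟨1, b⟩`. -/
def eps (D : D2H k R) (b : R) : k := D.pr 1 b

end D2H

open D2 D2H

/-- The map `a ↦ a₍₁₎ m S_A(a₍₂₎)` determined by the comultiplication `Δ_A` and
antipode `S_A` of `A`; `actOf ΔA SA m a = a ⊳ m`. -/
noncomputable def actOf {k : Type*} [Field k] {R : Type*} [Ring R] [Algebra k R]
    (ΔA : R →ₗ[k] R ⊗[k] R) (SA : R →ₗ[k] R) (m : R) : R →ₗ[k] R :=
  LinearMap.mul' k R ∘ₗ TensorProduct.map (LinearMap.mulRight k m) SA ∘ₗ ΔA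

namespace D2S

variable {k : Type*} [Field k] {R : Type*} [Ring R] [Algebra k R] (D : D2S k R)

/-! ### The centralizers -/

variable {D}

lemma mem_U {x : R} : x ∈ D.U ↔ x ∈ D.M ∧ ∀ y ∈ D.N, x * y = y * x := by
  simp only [D2.U, Algebra.mem_inf, Subalgebra.mem_centralizer_iff, SetLike.mem_coe, eq_comm]

lemma mem_V {x : R} : x ∈ D.V ↔ x ∈ D.M1 ∧ ∀ y ∈ D.M, x * y = y * x := by
  simp only [D2.V, Algebra.mem_inf, Subalgebra.mem_centralizer_iff, SetLike.mem_coe, eq_comm]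

lemma mem_A {x : R} : x ∈ D.A ↔ x ∈ D.M1 ∧ ∀ y ∈ D.N, x * y = y * x := by
  simp only [D2.A, Algebra.mem_inf, Subalgebra.mem_centralizer_iff, SetLike.mem_coe, eq_comm]

lemma mem_B {x : R} : x ∈ D.B ↔ ∀ y ∈ D.M, x * y = y * x := by
  simp only [D2.B, Subalgebra.mem_centralizer_iff, SetLike.mem_coe, eq_comm]

lemma mem_C {x : R} : x ∈ D.C ↔ ∀ y ∈ D.N, x * y = y * x := by
  simp only [D2.C, Subalgebra.mem_centralizer_iff, SetLike.mem_coe, eq_comm]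

lemma V_le_A {x : R} (h : x ∈ D.V) : x ∈ D.A :=
  mem_A.2 ⟨(mem_V.1 h).1, fun y hy => (mem_V.1 h).2 y (D.hNM hy)⟩

lemma V_le_B {x : R} (h : x ∈ D.V) : x ∈ D.B := mem_B.2 (mem_V.1 h).2

lemma U_le_A {x : R} (h : x ∈ D.U) : x ∈ D.A :=
  mem_A.2 ⟨D.hMM1 (mem_U.1 h).1, (mem_U.1 h).2⟩

lemma A_le_C {x : R} (h : x ∈ D.A) : x ∈ D.C := mem_C.2 (mem_A.1 h).2

lemma B_le_C {x : R} (h : x ∈ D.B) : x ∈ D.C :=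
  mem_C.2 fun y hy => mem_B.1 h y (D.hNM hy)

variable (D)

lemma e1_mem_A : D.e1 ∈ D.A := mem_A.2 ⟨D.he1_mem, D.he1_N⟩
lemma e2_mem_B : D.e2 ∈ D.B := mem_B.2 D.he2_M
lemma f1_mem_V (i) : D.f1 i ∈ D.V := mem_V.2 (D.hf1 i)
lemma f2_mem_V (i) : D.f2 i ∈ D.V := mem_V.2 (D.hf2 i)
lemma w_mem_V : D.w ∈ D.V := mem_V.2 D.hw_mem
lemma winv_mem_V : D.winv ∈ D.V := mem_V.2 D.hwinv_mem
lemma zb_mem_A (j) : D.zb j ∈ D.A := mem_A.2 (D.hzb j)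
lemma wb_mem_A (j) : D.wb j ∈ D.A := mem_A.2 (D.hwb j)
lemma ub_mem_B (j) : D.ub j ∈ D.B := mem_B.2 (D.hub j)
lemma vb_mem_B (j) : D.vb j ∈ D.B := mem_B.2 (D.hvb j)

variable {D}

lemma EM_mem_U {a : R} (ha : a ∈ D.A) : D.EM a ∈ D.U := by
  rw [mem_A] at ha
  refine mem_U.2 ⟨D.hEM_mem a ha.1, fun y hy => ?_⟩
  rw [← D.hEM_right y (D.hNM hy) a ha.1, ha.2 y hy, D.hEM_left y (D.hNM hy) a ha.1]

lemma EM1_mem_A {c : R} (hc : c ∈ D.C) : D.EM1 c ∈ D.A := by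
  rw [mem_C] at hc
  refine mem_A.2 ⟨D.hEM1_mem c, fun y hy => ?_⟩
  have hy' := D.hMM1 (D.hNM hy)
  rw [← D.hEM1_right y hy', hc y hy, D.hEM1_left y hy']

lemma EM1_mem_V {b : R} (hb : b ∈ D.B) : D.EM1 b ∈ D.V := by
  rw [mem_B] at hb
  refine mem_V.2 ⟨D.hEM1_mem b, fun y hy => ?_⟩
  have hy' := D.hMM1 hy
  rw [← D.hEM1_right y hy', hb y hy, D.hEM1_left y hy']

/-! ### The first basic construction as an endomorphism ring -/

lemma EM_e1_right {m : R} (hm : m ∈ D.M) : D.EM (m * D.e1) = D.lam • m := by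
  simpa using D.hEM_e1 m hm 1 (one_mem _)

lemma EM_e1_left {m : R} (hm : m ∈ D.M) : D.EM (D.e1 * m) = D.lam • m := by
  simpa using D.hEM_e1 1 (one_mem _) m hm

/-- `E_M` detects elements of `M` multiplied by the Jones idempotent `e₁`. -/
lemma e1_right_cancel {m m' : R} (hm : m ∈ D.M) (hm' : m' ∈ D.M)
    (h : m * D.e1 = m' * D.e1) : m = m' := by
  have := congrArg D.EM h
  rw [EM_e1_right hm, EM_e1_right hm'] at this
  exact smul_right_injective R D.lam_ne this

lemma e1_left_cancel {m m' : R} (hm : m ∈ D.M) (hm' : m' ∈ D.M)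
    (h : D.e1 * m = D.e1 * m') : m = m' := by
  have := congrArg D.EM h
  rw [EM_e1_left hm, EM_e1_left hm'] at this
  exact smul_right_injective R D.lam_ne this

lemma EM1_e2 {x y : R} (hx : x ∈ D.M1) (hy : y ∈ D.M1) :
    D.EM1 (x * (D.e2 * y)) = D.lam • (x * y) := by
  rw [← mul_assoc]; exact D.hEM1_e2 x hx y hy

lemma e1_mul_e1 {x : R} (hx : x ∈ D.M) : D.e1 * x * D.e1 = D.E x * D.e1 := by
  rw [D.he1_jones x hx, D.he1_jones' x hx]

/-- The unit of `M₁ = M e₁ M`. -/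
lemma one_e1 : ∑ i, D.xb i * D.e1 * D.yb i = 1 := by
  have key : ∀ z ∈ D.M1.toSubmodule, (∑ i, D.xb i * D.e1 * D.yb i) * z = z := by
    intro z hz
    rw [D.hM1_gen] at hz
    induction hz using Submodule.span_induction with
    | mem x hx =>
      obtain ⟨m, hm, m', hm', rfl⟩ := hx
      have : ∀ i, D.xb i * D.e1 * D.yb i * (m * D.e1 * m')
          = D.xb i * D.E (D.yb i * m) * (D.e1 * m') := by
        intro i
        have := e1_mul_e1 (mul_mem (D.hyb i) hm)
        calc _ = D.xb i * (D.e1 * (D.yb i * m) * D.e1) * m' := by simp only [mul_assoc]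
          _ = _ := by rw [this]; simp only [mul_assoc]
      rw [Finset.sum_mul, Finset.sum_congr rfl fun i _ => this i, ← Finset.sum_mul,
        D.hdual2 m hm, mul_assoc]
    | zero => simp
    | add x y _ _ hx hy => rw [mul_add, hx, hy]
    | smul c x _ hx => rw [mul_smul_comm, hx]
  simpa using key 1 (one_mem D.M1)

/-- Elements are determined by their left multiplication on `M e₁`. -/
lemma ext_e1 {c c' : R} (h : ∀ m ∈ D.M, c * m * D.e1 = c' * m * D.e1) : c = c' := by
  rw [← mul_one c, ← mul_one c', ← one_e1 (D := D), Finset.mul_sum, Finset.mul_sum]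
  refine Finset.sum_congr rfl fun i _ => ?_
  rw [← mul_assoc, ← mul_assoc, h _ (D.hxb i), mul_assoc, mul_assoc, mul_assoc]

variable (D) in
/-- The element `∑ α(xᵢ) e₁ yᵢ` of `M₁` representing an endomorphism `α` of `M`. -/
noncomputable def op (α : R →ₗ[k] R) : R := ∑ i, α (D.xb i) * D.e1 * D.yb i

lemma op_e1 {α : R →ₗ[k] R} (hα : ∀ x ∈ D.M, ∀ n ∈ D.N, α (x * n) = α x * n)
    {m : R} (hm : m ∈ D.M) : D.op α * m * D.e1 = α m * D.e1 := by
  conv_rhs => rw [← D.hdual2 m hm, map_sum, Finset.sum_mul]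
  rw [op, Finset.sum_mul, Finset.sum_mul]
  refine Finset.sum_congr rfl fun i _ => ?_
  have h := mul_mem (D.hyb i) hm
  rw [hα _ (D.hxb i) _ (D.hE_mem _ h), mul_assoc _ (D.E _), ← e1_mul_e1 h]
  simp only [mul_assoc]

lemma op_mem_A {α : R →ₗ[k] R} (hM : ∀ x ∈ D.M, α x ∈ D.M)
    (hα : ∀ x ∈ D.M, ∀ n ∈ D.N, α (x * n) = α x * n)
    (hα' : ∀ x ∈ D.M, ∀ n ∈ D.N, α (n * x) = n * α x) : D.op α ∈ D.A := by
  refine mem_A.2 ⟨sum_mem fun i _ => mul_mem (mul_mem (D.hMM1 (hM _ (D.hxb i))) D.he1_mem)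
    (D.hMM1 (D.hyb i)), fun n hn => ext_e1 (D := D) fun m hm => ?_⟩
  rw [mul_assoc _ n m, op_e1 hα (mul_mem (D.hNM hn) hm), hα' m hm n hn, mul_assoc, mul_assoc,
    mul_assoc, ← mul_assoc _ m, op_e1 hα hm]

/-- The action `a ▷ m = λ⁻¹ E_M(a m e₁)` of `M₁` on `M`, i.e. `(a ▷ m) e₁ = a m e₁`. -/
noncomputable def act (D : D2S k R) (a m : R) : R := D.lam⁻¹ • D.EM (a * m * D.e1)

lemma act_mem {a m : R} (ha : a ∈ D.M1) (hm : m ∈ D.M) : D.act a m ∈ D.M :=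
  Subalgebra.smul_mem _ (D.hEM_mem _ (mul_mem (mul_mem ha (D.hMM1 hm)) D.he1_mem)) _

lemma act_e1 {a m : R} (ha : a ∈ D.M1) (hm : m ∈ D.M) :
    D.act a m * D.e1 = a * m * D.e1 := by
  rw [act, smul_mul_assoc, ← D.hPP1 (a * m) (mul_mem ha (D.hMM1 hm))]

lemma act_eq {a m m' : R} (ha : a ∈ D.M1) (hm : m ∈ D.M) (hm' : m' ∈ D.M)
    (h : a * m * D.e1 = m' * D.e1) : D.act a m = m' :=
  e1_right_cancel (act_mem ha hm) hm' (by rw [act_e1 ha hm, h])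

/-! ### The averaging map onto the centralizer of `M` -/

/-- The map `Z ↦ ∑ xᵢ Z yᵢ`; up to the factor `λ` it is the trace preserving
conditional expectation of `C` onto `B`. -/
noncomputable def P (D : D2S k R) (Z : R) : R := ∑ i, D.xb i * Z * D.yb i

lemma P_mem_B {Z : R} (hZ : Z ∈ D.C) : D.P Z ∈ D.B := by
  refine mem_B.2 fun m hm => ?_
  have hZ' := mem_C.1 hZ
  have hmem : ∀ l i, D.yb l * (m * D.xb i) ∈ D.M := fun l i =>
    mul_mem (D.hyb l) (mul_mem hm (D.hxb i))
  have h1 : ∀ i, m * (D.xb i * Z * D.yb i)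
      = ∑ l, D.xb l * Z * (D.E (D.yb l * m * D.xb i) * D.yb i) := by
    intro i
    rw [← mul_assoc, ← mul_assoc]
    conv_lhs => rw [← D.hdual2 (m * D.xb i) (mul_mem hm (D.hxb i))]
    rw [Finset.sum_mul, Finset.sum_mul]
    refine Finset.sum_congr rfl fun l _ => ?_
    rw [mul_assoc (D.xb l) (D.E _) Z, ← hZ' _ (D.hE_mem _ (hmem l i))]
    simp only [mul_assoc]
  rw [P, Finset.mul_sum, Finset.sum_congr rfl fun i _ => h1 i, Finset.sum_comm, Finset.sum_mul]
  refine Finset.sum_congr rfl fun l _ => ?_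
  rw [← Finset.mul_sum, D.hdual1 _ (mul_mem (D.hyb l) hm), mul_assoc _ _ m]

lemma P_mem_V {Z : R} (hZ : Z ∈ D.A) : D.P Z ∈ D.V :=
  mem_V.2 ⟨sum_mem fun i _ => mul_mem (mul_mem (D.hMM1 (D.hxb i)) (mem_A.1 hZ).1)
    (D.hMM1 (D.hyb i)), mem_B.1 (P_mem_B (A_le_C hZ))⟩

/-- Moving `xᵢ` around the trace leaves `∑ yᵢ xᵢ = λ⁻¹`, which is where the symmetric
product assumption enters. -/
lemma T_P (Z : R) {b : R} (hb : b ∈ D.B) : D.T (D.P Z * b) = D.lam⁻¹ * D.T (Z * b) := by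
  have : ∀ i, D.T (D.xb i * Z * D.yb i * b) = D.T (Z * b * (D.yb i * D.xb i)) := by
    intro i
    rw [mul_assoc, ← mem_B.1 hb _ (D.hyb i), mul_assoc, D.hT_tr]
    simp only [mul_assoc]
  rw [P, Finset.sum_mul, map_sum, Finset.sum_congr rfl fun i _ => this i, ← map_sum,
    ← Finset.mul_sum, D.hindex', mul_smul_comm, mul_one, map_smul, smul_eq_mul]

lemma P_e1 : D.P D.e1 = 1 := one_e1

lemma T_e1 {b : R} (hb : b ∈ D.B) : D.T (b * D.e1) = D.lam * D.T b := by
  have h := T_P D.e1 hb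
  rw [P_e1, one_mul, D.hT_tr] at h
  rw [h, mul_inv_cancel_left₀ D.lam_ne]

lemma P_mul_e1 {Z : R} (hZ : Z ∈ D.C) : D.P (Z * D.e1) * D.e1 = Z * D.e1 := by
  have : ∀ i, D.xb i * (Z * D.e1) * D.yb i * D.e1 = D.xb i * D.E (D.yb i * 1) * (Z * D.e1) := by
    intro i
    have h := e1_mul_e1 (D.hyb i)
    rw [mul_one, mul_assoc _ (D.E _), ← mul_assoc (D.E _), ← mem_C.1 hZ _ (D.hE_mem _ (D.hyb i)),
      mul_assoc Z, ← h]
    simp only [mul_assoc]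
  rw [P, Finset.sum_mul, Finset.sum_congr rfl fun i _ => this i, ← Finset.sum_mul,
    D.hdual2 1 (one_mem _), one_mul]

/-! ### The anti-isomorphism between `V` and `U` -/

/-- The anti-isomorphism `V → U`, `v ↦ λ⁻¹ E_M(v e₁)`, characterized by `v e₁ = σ(v) e₁`:
the element `v` acts on `M` as right multiplication by `σ(v)`. -/
noncomputable def sig (D : D2S k R) : R →ₗ[k] R :=
  D.lam⁻¹ • (D.EM ∘ₗ LinearMap.mulRight k D.e1)

lemma sig_apply (v : R) : D.sig v = D.lam⁻¹ • D.EM (v * D.e1) := rfl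

lemma sig_mem {v : R} (hv : v ∈ D.A) : D.sig v ∈ D.U :=
  Subalgebra.smul_mem _ (EM_mem_U (mul_mem hv (e1_mem_A D))) _

lemma sig_e1 {v : R} (hv : v ∈ D.V) : D.sig v * D.e1 = v * D.e1 := by
  rw [sig_apply, smul_mul_assoc, ← D.hPP1 v (mem_V.1 hv).1]

lemma V_mul_e1 {v m : R} (hv : v ∈ D.V) (hm : m ∈ D.M) :
    v * (m * D.e1) = m * D.sig v * D.e1 := by
  rw [mul_assoc, sig_e1 hv, ← mul_assoc, (mem_V.1 hv).2 m hm, mul_assoc]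

lemma sig_eq {v u : R} (hv : v ∈ D.V) (hu : u ∈ D.M) (h : v * D.e1 = u * D.e1) :
    D.sig v = u :=
  e1_right_cancel (mem_U.1 (sig_mem (V_le_A hv))).1 hu (by rw [sig_e1 hv, h])

lemma sig_one : D.sig 1 = 1 := sig_eq (one_mem _) (one_mem _) rfl

lemma sig_mul {v v' : R} (hv : v ∈ D.V) (hv' : v' ∈ D.V) :
    D.sig (v * v') = D.sig v' * D.sig v := by
  have h := (mem_U.1 (sig_mem (V_le_A hv))).1
  have h' := (mem_U.1 (sig_mem (V_le_A hv'))).1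
  refine sig_eq (mul_mem hv hv') (mul_mem h' h) ?_
  rw [mul_assoc, ← sig_e1 hv', V_mul_e1 hv h']

/-- `V` and `σ` also match on the other side of `e₁`; this rests on the symmetry of `E`. -/
lemma e1_sig {v : R} (hv : v ∈ D.V) : D.e1 * D.sig v = D.e1 * v := by
  have hu := mem_U.1 (sig_mem (V_le_A hv))
  have hu' := mem_U.1 (EM_mem_U (mul_mem (e1_mem_A D) (V_le_A hv)))
  have h1 : D.e1 * v = D.e1 * (D.lam⁻¹ • D.EM (D.e1 * v)) := by
    rw [mul_smul_comm, ← D.hPP1' v (mem_V.1 hv).1]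
  have hu'' : D.lam⁻¹ • D.EM (D.e1 * v) ∈ D.M := Subalgebra.smul_mem _ hu'.1 _
  set u' := D.lam⁻¹ • D.EM (D.e1 * v) with hu'_def
  have h2 : ∀ m ∈ D.M, D.E (u' * m) = D.E (D.sig v * m) := by
    intro m hm
    rw [D.hsymm _ hu.1 hu.2 m hm]
    refine e1_left_cancel (D.hNM (D.hE_mem _ (mul_mem hu'' hm)))
      (D.hNM (D.hE_mem _ (mul_mem hm hu.1))) ?_
    rw [← D.he1_jones _ (mul_mem hu'' hm), ← D.he1_jones _ (mul_mem hm hu.1), ← mul_assoc,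
      ← h1, mul_assoc, mul_assoc, mul_assoc, V_mul_e1 hv hm]
  have h3 : u' = D.sig v := by
    rw [← D.hdual1 _ hu'', ← D.hdual1 _ hu.1]
    exact Finset.sum_congr rfl fun i _ => by rw [h2 _ (D.hxb i)]
  rw [h1, h3]

/-- Every element of `U` is `σ` of the right multiplication operator it defines. -/
lemma exists_sig {u : R} (hu : u ∈ D.U) : ∃ v ∈ D.V, D.sig v = u := by
  have hu' := mem_U.1 hu
  have hα : ∀ x ∈ D.M, ∀ n ∈ D.N, LinearMap.mulRight k u (x * n)
      = LinearMap.mulRight k u x * n := by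
    intro x _ n hn
    simp only [LinearMap.mulRight_apply, mul_assoc, hu'.2 n hn]
  have hv : D.op (LinearMap.mulRight k u) ∈ D.V := by
    refine mem_V.2 ⟨sum_mem fun i _ => mul_mem (mul_mem (D.hMM1 (mul_mem (D.hxb i) hu'.1))
      D.he1_mem) (D.hMM1 (D.hyb i)), fun y hy => ext_e1 (D := D) fun m hm => ?_⟩
    rw [mul_assoc _ y m, op_e1 hα (mul_mem hy hm), mul_assoc y, mul_assoc y, op_e1 hα hm]
    simp only [LinearMap.mulRight_apply, mul_assoc]
  refine ⟨_, hv, sig_eq hv hu'.1 ?_⟩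
  simpa using op_e1 hα (one_mem D.M)

lemma T_sig {v : R} (hv : v ∈ D.V) : D.T (D.sig v) = D.T v := by
  rw [sig_apply, map_smul, D.hTEM _ (mul_mem (mem_V.1 hv).1 D.he1_mem), T_e1 (V_le_B hv),
    smul_eq_mul, inv_mul_cancel_left₀ D.lam_ne]

/-! ### Dual bases for the trace on `V`, `U` and `A` -/

/-- Symmetry of `f`, in the form used for rewriting sums. -/
lemma f_swap {X : Type*} [AddCommGroup X] [Module k X] (φ : R →ₗ[k] R →ₗ[k] X) :
    ∑ l, φ (D.f1 l) (D.f2 l) = ∑ l, φ (D.f2 l) (D.f1 l) := by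
  simpa using congrArg (TensorProduct.lift φ) D.hf_symm

lemma f_cas {v : R} (hv : v ∈ D.V) :
    ∑ l, (D.f1 l * v) ⊗ₜ[k] D.f2 l = ∑ l, D.f1 l ⊗ₜ[k] (v * D.f2 l) := by
  have h1 := congrArg (TensorProduct.comm k R R) (D.hf_cas v (mem_V.1 hv).1 (mem_V.1 hv).2)
  simp only [map_sum, TensorProduct.comm_tmul] at h1
  have h2 := f_swap (D := D) ((TensorProduct.mk k R R).compl₁₂ (LinearMap.mulRight k v) .id)
  have h3 := f_swap (D := D) ((TensorProduct.mk k R R).compl₁₂ .id (LinearMap.mulLeft k v))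
  simp only [LinearMap.compl₁₂_apply, LinearMap.mulRight_apply, LinearMap.mulLeft_apply,
    LinearMap.id_apply, TensorProduct.mk_apply] at h2 h3
  rw [h2, h3, h1]

lemma winv_comm {v : R} (hv : v ∈ D.V) : D.winv * v * D.w = v := by
  rw [mul_assoc, ← D.hw_central v (mem_V.1 hv).1 (mem_V.1 hv).2, ← mul_assoc, D.hw_inv.2, one_mul]

lemma V_dual {v : R} (hv : v ∈ D.V) :
    ∑ l, D.T (D.f1 l * v) • D.f2 l = D.winv * v := by
  have h : D.winv * v ∈ D.V := mul_mem D.winv_mem_V hv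
  have h2 := f_swap (D := D) ((D.T ∘ₗ LinearMap.mulRight k v).smulRight LinearMap.id)
  simp only [LinearMap.smulRight_apply, LinearMap.comp_apply, LinearMap.mulRight_apply,
    LinearMap.smul_apply, LinearMap.id_apply] at h2
  rw [h2, ← D.hw_dual _ (mem_V.1 h).1 (mem_V.1 h).2]
  refine Finset.sum_congr rfl fun l _ => ?_
  rw [← mul_assoc, winv_comm hv, D.hT_tr]

/-- Transport along `σ` of the dual bases of the trace on `V`. -/
lemma U_dual {u : R} (hu : u ∈ D.U) :
    ∑ l, D.T (D.sig (D.f2 l) * D.sig D.w * u) • D.sig (D.f1 l) = u := by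
  obtain ⟨v, hv, rfl⟩ := exists_sig hu
  conv_rhs => rw [← D.hw_dual v (mem_V.1 hv).1 (mem_V.1 hv).2, map_sum]
  refine Finset.sum_congr rfl fun l _ => ?_
  have hwf := mul_mem D.w_mem_V (D.f2_mem_V l)
  rw [← sig_mul D.w_mem_V (D.f2_mem_V l), ← sig_mul hv hwf, T_sig (mul_mem hv hwf), map_smul]

lemma U_dual' {u : R} (hu : u ∈ D.U) :
    ∑ l, D.T (D.sig (D.f1 l) * D.sig D.w * u) • D.sig (D.f2 l) = u := by
  have h2 := f_swap (D := D) ((D.T ∘ₗ LinearMap.mulRight k u ∘ₗ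
    LinearMap.mulRight k (D.sig D.w) ∘ₗ D.sig).smulRight D.sig)
  simp only [LinearMap.smulRight_apply, LinearMap.comp_apply, LinearMap.mulRight_apply,
    LinearMap.smul_apply] at h2
  rw [h2, U_dual hu]

lemma sig_f_one : ∑ l, D.sig (D.f1 l) * D.sig (D.f2 l) = 1 := by
  have h := f_swap (D := D) ((LinearMap.mul k R).compl₁₂ D.sig D.sig)
  simp only [LinearMap.compl₁₂_apply, LinearMap.mul_apply'] at h
  rw [h, ← sig_one (D := D), ← D.hf_one, map_sum]
  exact Finset.sum_congr rfl fun l _ => (sig_mul (D.f1_mem_V l) (D.f2_mem_V l)).symm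

lemma sig_w_comm {v : R} (hv : v ∈ D.V) : D.sig D.w * D.sig v = D.sig v * D.sig D.w := by
  rw [← sig_mul hv D.w_mem_V, ← sig_mul D.w_mem_V hv,
    D.hw_central v (mem_V.1 hv).1 (mem_V.1 hv).2]

lemma sig_winv_cancel {v : R} (hv : v ∈ D.V) :
    D.sig D.winv * D.sig v * D.sig D.w = D.sig v := by
  rw [mul_assoc, ← sig_w_comm hv, ← mul_assoc, ← sig_mul D.w_mem_V D.winv_mem_V, D.hw_inv.1,
    sig_one, one_mul]

/-- First legs of dual bases for the trace `T` on `A`. -/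
noncomputable def pp (D : D2S k R) (α : Fin D.nA × Fin D.nV) : R := D.zb α.1 * D.sig (D.f1 α.2)

/-- Second legs of dual bases for the trace `T` on `A`. -/
noncomputable def qq (D : D2S k R) (α : Fin D.nA × Fin D.nV) : R :=
  D.sig (D.f2 α.2) * D.sig D.w * D.wb α.1

lemma qq_mem (α) : D.qq α ∈ D.A :=
  mul_mem (mul_mem (U_le_A (sig_mem (V_le_A (D.f2_mem_V _))))
    (U_le_A (sig_mem (V_le_A D.w_mem_V)))) (D.wb_mem_A _)

lemma A_dual {x : R} (hx : x ∈ D.A) : ∑ α, D.T (D.qq α * x) • D.pp α = x := by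
  rw [Fintype.sum_prod_type]
  conv_rhs => rw [← D.hdualA2 x (mem_A.1 hx).1]
  refine Finset.sum_congr rfl fun j _ => ?_
  have hwx := mul_mem (D.wb_mem_A j) hx
  conv_rhs => rw [← U_dual (EM_mem_U hwx), Finset.mul_sum]
  refine Finset.sum_congr rfl fun l _ => ?_
  have hu := mul_mem (mem_U.1 (sig_mem (V_le_A (D.f2_mem_V l)))).1
    (mem_U.1 (sig_mem (V_le_A D.w_mem_V))).1
  rw [mul_smul_comm, ← D.hEM_left _ hu _ (mem_A.1 hwx).1,
    D.hTEM _ (mul_mem (D.hMM1 hu) (mem_A.1 hwx).1), qq, pp, mul_assoc _ (D.wb j)]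

/-- The dual bases tensor of the trace `T` on `A` is symmetric. -/
lemma A_swap {X : Type*} [AddCommGroup X] [Module k X] (φ : R →ₗ[k] R →ₗ[k] X) :
    ∑ α, φ (D.qq α) (D.pp α) = ∑ α, φ (D.pp α) (D.qq α) := by
  have h1 : ∀ α, φ (D.qq α) (D.pp α)
      = ∑ β, D.T (D.qq β * D.qq α) • φ (D.pp β) (D.pp α) := by
    intro α
    conv_lhs => rw [← A_dual (qq_mem (D := D) α)]
    simp only [map_sum, map_smul, LinearMap.sum_apply, LinearMap.smul_apply]
  have h2 : ∀ β, φ (D.pp β) (D.qq β)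
      = ∑ α, D.T (D.qq β * D.qq α) • φ (D.pp β) (D.pp α) := by
    intro β
    conv_lhs => rw [← A_dual (qq_mem (D := D) β)]
    simp only [map_sum, map_smul]
    exact Finset.sum_congr rfl fun α _ => by rw [D.hT_tr]
  rw [Finset.sum_congr rfl fun α _ => h1 α, Finset.sum_congr rfl fun α _ => h2 α,
    Finset.sum_comm]

/-! ### Non-degeneracy of the pairing -/

/-- The pairing `⟨·, b⟩` as a linear functional in the first variable. -/
noncomputable def pairL (D : D2S k R) (b : R) : R →ₗ[k] k :=
  D.lam⁻¹ ^ 2 • (D.T ∘ₗ LinearMap.mulRight k (D.e2 * D.e1 * D.w * b))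

lemma pairL_apply (a b : R) :
    D.pairL b a = D.lam⁻¹ ^ 2 * D.T (a * D.e2 * D.e1 * D.w * b) := by
  simp only [pairL, LinearMap.smul_apply, LinearMap.comp_apply, LinearMap.mulRight_apply,
    smul_eq_mul, mul_assoc]

lemma B_dual {b : R} (hb : b ∈ D.B) :
    ∑ i, ∑ l, D.T (b * (D.ub i * (D.w * D.f2 l))) • (D.f1 l * D.vb i) = b := by
  conv_rhs => rw [← D.hdualB1 b]
  refine Finset.sum_congr rfl fun i _ => ?_
  have hV := EM1_mem_V (mul_mem hb (D.ub_mem_B i))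
  conv_rhs => rw [← D.hw_dual _ (mem_V.1 hV).1 (mem_V.1 hV).2, Finset.sum_mul]
  refine Finset.sum_congr rfl fun l _ => ?_
  rw [smul_mul_assoc, ← D.hEM1_right _ (mem_V.1 (mul_mem D.w_mem_V (D.f2_mem_V l))).1,
    D.hTEM1, mul_assoc]

/-- First legs in `B` of dual bases for the pairing of `A` and `B`. -/
noncomputable def pb (D : D2S k R) (α : Fin D.nB × Fin D.nV) : R :=
  D.winv * (D.ub α.1 * (D.w * D.f2 α.2))

/-- Second legs in `A` of dual bases for the pairing of `A` and `B`. -/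
noncomputable def qa (D : D2S k R) (α : Fin D.nB × Fin D.nV) : R :=
  D.lam⁻¹ • D.EM1 (D.f1 α.2 * D.vb α.1 * D.e1 * D.e2)

lemma pb_mem (α) : D.pb α ∈ D.B :=
  mul_mem (V_le_B D.winv_mem_V) (mul_mem (D.ub_mem_B _)
    (V_le_B (mul_mem D.w_mem_V (D.f2_mem_V _))))

/-- The families `pb`, `qa` are dual bases for the pairing, so the pairing is non-degenerate
on the side of `A`. -/
lemma pair_dual {a : R} (ha : a ∈ D.A) : ∑ α, D.pairL (D.pb α) a • D.qa α = a := by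
  have hZ : a * D.e2 ∈ D.C := mul_mem (A_le_C ha) (B_le_C D.e2_mem_B)
  have hZ1 : a * D.e2 * D.e1 ∈ D.C := mul_mem hZ (A_le_C D.e1_mem_A)
  have h1 : D.EM1 (D.P (a * D.e2 * D.e1) * D.e1 * D.e2) = D.lam ^ 2 • a := by
    rw [P_mul_e1 hZ, mul_assoc, mul_assoc, ← mul_assoc D.e2, D.hbraid2, mul_smul_comm, map_smul,
      ← mul_one (a * D.e2), D.hEM1_e2 a (mem_A.1 ha).1 1 (one_mem _), mul_one, smul_smul, pow_two]
  have h2 : a = D.lam⁻¹ ^ 2 • D.EM1 (D.P (a * D.e2 * D.e1) * D.e1 * D.e2) := by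
    rw [h1, smul_smul, ← mul_pow, inv_mul_cancel₀ D.lam_ne, one_pow, one_smul]
  conv_rhs => rw [h2, ← B_dual (P_mem_B hZ1)]
  simp only [Finset.sum_mul, map_sum, Finset.smul_sum, smul_mul_assoc, map_smul]
  rw [Fintype.sum_prod_type]
  refine Finset.sum_congr rfl fun i _ => Finset.sum_congr rfl fun l _ => ?_
  have hb : D.ub i * (D.w * D.f2 l) ∈ D.B :=
    mul_mem (D.ub_mem_B _) (V_le_B (mul_mem D.w_mem_V (D.f2_mem_V _)))
  rw [T_P _ hb, pairL_apply, qa, pb, smul_smul, smul_smul, mul_assoc _ D.w, ← mul_assoc D.w,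
    D.hw_inv.1, one_mul]
  congr 1
  ring

lemma pair_nondeg {a a' : R} (ha : a ∈ D.A) (ha' : a' ∈ D.A)
    (h : ∀ b ∈ D.B, D.pairL b a = D.pairL b a') : a = a' := by
  rw [← pair_dual ha, ← pair_dual ha']
  exact Finset.sum_congr rfl fun α _ => by rw [h _ (pb_mem α)]

/-- Elements of `A ⊗ A` are determined by their pairings with `B ⊗ B`. -/
lemma pair_nondeg_tensor {t t' : R ⊗[k] R}
    (ht : t ∈ Submodule.span k {z : R ⊗[k] R | ∃ x ∈ D.A, ∃ y ∈ D.A, z = x ⊗ₜ[k] y})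
    (ht' : t' ∈ Submodule.span k {z : R ⊗[k] R | ∃ x ∈ D.A, ∃ y ∈ D.A, z = x ⊗ₜ[k] y})
    (h : ∀ b ∈ D.B, ∀ b' ∈ D.B,
      LinearMap.mul' k k (TensorProduct.map (D.pairL b) (D.pairL b') t)
        = LinearMap.mul' k k (TensorProduct.map (D.pairL b) (D.pairL b') t')) : t = t' := by
  let Φ : R →ₗ[k] R := ∑ α, (D.pairL (D.pb α)).smulRight (D.qa α)
  have hΦ : ∀ a ∈ D.A, Φ a = a := fun a ha => by
    simpa [Φ, LinearMap.sum_apply] using pair_dual ha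
  have hid : ∀ s ∈ Submodule.span k {z : R ⊗[k] R | ∃ x ∈ D.A, ∃ y ∈ D.A, z = x ⊗ₜ[k] y},
      TensorProduct.map Φ Φ s = s := by
    intro s hs
    induction hs using Submodule.span_induction with
    | mem x hx =>
      obtain ⟨x, hx, y, hy, rfl⟩ := hx
      rw [TensorProduct.map_tmul, hΦ x hx, hΦ y hy]
    | zero => simp
    | add x y _ _ hx hy => rw [map_add, hx, hy]
    | smul c x _ hx => rw [map_smul, hx]
  have hexp : ∀ s : R ⊗[k] R, TensorProduct.map Φ Φ s = ∑ α, ∑ β, LinearMap.mul' k k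
      (TensorProduct.map (D.pairL (D.pb α)) (D.pairL (D.pb β)) s) • (D.qa α ⊗ₜ[k] D.qa β) := by
    intro s
    induction s using TensorProduct.induction_on with
    | zero => simp
    | add x y hx hy => simp only [map_add, hx, hy, add_smul, Finset.sum_add_distrib]
    | tmul x y =>
      simp only [Φ, LinearMap.sum_apply, LinearMap.smulRight_apply, TensorProduct.map_tmul,
        LinearMap.mul'_apply, TensorProduct.sum_tmul, TensorProduct.tmul_sum,
        TensorProduct.smul_tmul_smul]
      exact Finset.sum_comm
  rw [← hid t ht, ← hid t' ht', hexp, hexp]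
  exact Finset.sum_congr rfl fun α _ => Finset.sum_congr rfl fun β _ => by
    rw [h _ (pb_mem α) _ (pb_mem β)]

/-! ### The antipode of `A` -/

/-- The map `S₀` on `A` given by `(S₀(a) m) e₁ = λ⁻¹ E_M(e₁ m a) e₁`;
the antipode of `A` is its conjugate `w⁻¹ S₀(a) w`. -/
noncomputable def S0 (D : D2S k R) (a : R) : R :=
  D.op (D.lam⁻¹ • (D.EM ∘ₗ LinearMap.mulRight k a ∘ₗ LinearMap.mulLeft k D.e1))

lemma S0_right {a : R} (ha : a ∈ D.A) : ∀ x ∈ D.M, ∀ n ∈ D.N,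
    (D.lam⁻¹ • (D.EM ∘ₗ LinearMap.mulRight k a ∘ₗ LinearMap.mulLeft k D.e1)) (x * n)
    = (D.lam⁻¹ • (D.EM ∘ₗ LinearMap.mulRight k a ∘ₗ LinearMap.mulLeft k D.e1)) x * n := by
  intro x hx n hn
  simp only [LinearMap.smul_apply, LinearMap.comp_apply, LinearMap.mulRight_apply,
    LinearMap.mulLeft_apply, smul_mul_assoc]
  rw [← D.hEM_right n (D.hNM hn) _ (mul_mem (mul_mem D.he1_mem (D.hMM1 hx)) (mem_A.1 ha).1),
    mul_assoc _ a, (mem_A.1 ha).2 n hn]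
  simp only [mul_assoc]

lemma S0_mem {a : R} (ha : a ∈ D.A) : D.S0 a ∈ D.A := by
  refine op_mem_A ?_ (S0_right ha) ?_
  · intro x hx
    exact Subalgebra.smul_mem _ (D.hEM_mem _ (mul_mem (mul_mem D.he1_mem (D.hMM1 hx))
      (mem_A.1 ha).1)) _
  · intro x hx n hn
    simp only [LinearMap.smul_apply, LinearMap.comp_apply, LinearMap.mulRight_apply,
      LinearMap.mulLeft_apply, mul_smul_comm]
    rw [← D.hEM_left n (D.hNM hn) _ (mul_mem (mul_mem D.he1_mem (D.hMM1 hx)) (mem_A.1 ha).1),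
      ← mul_assoc, ← mul_assoc, D.he1_N n hn]
    simp only [mul_assoc]

lemma S0_e1 {a m : R} (ha : a ∈ D.A) (hm : m ∈ D.M) :
    D.S0 a * m * D.e1 = D.lam⁻¹ • D.EM (D.e1 * m * a) * D.e1 :=
  op_e1 (S0_right ha) hm

/-- The trace identity which identifies `S₀`, up to conjugation by `w`, with the dual of the
antipode of `B`. -/
lemma T_S0 {a b : R} (ha : a ∈ D.A) (hb : b ∈ D.B) :
    D.T (b * D.e1 * D.e2 * D.S0 a) = D.T (b * a * D.e2 * D.e1) := by
  have hZ : a * D.e2 * D.e1 ∈ D.C :=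
    mul_mem (mul_mem (A_le_C ha) (B_le_C D.e2_mem_B)) (A_le_C D.e1_mem_A)
  have h1 : b * D.e1 * D.e2 * D.S0 a = b * D.e1 * D.P (a * D.e2 * D.e1) := by
    rw [S0, op, P, Finset.mul_sum, Finset.mul_sum]
    refine Finset.sum_congr rfl fun i _ => ?_
    have hx : D.e1 * D.xb i * a ∈ D.M1 :=
      mul_mem (mul_mem D.he1_mem (D.hMM1 (D.hxb i))) (mem_A.1 ha).1
    simp only [LinearMap.smul_apply, LinearMap.comp_apply, LinearMap.mulRight_apply,
      LinearMap.mulLeft_apply, smul_mul_assoc, mul_smul_comm]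
    calc D.lam⁻¹ • (b * D.e1 * D.e2 * (D.EM (D.e1 * D.xb i * a) * D.e1 * D.yb i))
        = D.lam⁻¹ • (b * D.e1 * (D.e2 * D.EM (D.e1 * D.xb i * a)) * D.e1 * D.yb i) := by
          simp only [mul_assoc]
      _ = D.lam⁻¹ • (b * (D.e1 * D.e2 * D.e1) * (D.xb i * (a * D.e2 * D.e1) * D.yb i)) := by
          rw [← D.he2_jones _ hx]; simp only [mul_assoc]
      _ = _ := by
          rw [D.hbraid1, mul_smul_comm, smul_mul_assoc, smul_smul, inv_mul_cancel₀ D.lam_ne,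
            one_smul]
  rw [h1, D.hT_tr, ← mul_assoc, T_e1 (mul_mem (P_mem_B hZ) hb), T_P _ hb,
    mul_inv_cancel_left₀ D.lam_ne, D.hT_tr]
  simp only [mul_assoc]

/-! ### The comultiplication of `A` -/

/-- The elements `aʲ` of `A` with `aʲ ▷ m = E_M(a m zⱼ)`, so that
`a m = ∑ⱼ (aʲ ▷ m) wⱼ`. -/
noncomputable def aj (D : D2S k R) (a : R) (j : Fin D.nA) : R :=
  D.op (D.EM ∘ₗ LinearMap.mulRight k (D.zb j) ∘ₗ LinearMap.mulLeft k a)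

lemma aj_right {a : R} (ha : a ∈ D.A) (j) : ∀ x ∈ D.M, ∀ n ∈ D.N,
    (D.EM ∘ₗ LinearMap.mulRight k (D.zb j) ∘ₗ LinearMap.mulLeft k a) (x * n)
    = (D.EM ∘ₗ LinearMap.mulRight k (D.zb j) ∘ₗ LinearMap.mulLeft k a) x * n := by
  intro x hx n hn
  simp only [LinearMap.comp_apply, LinearMap.mulRight_apply, LinearMap.mulLeft_apply]
  rw [← D.hEM_right n (D.hNM hn) _ (mul_mem (mul_mem (mem_A.1 ha).1 (D.hMM1 hx)) (D.hzb j).1),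
    mul_assoc _ (D.zb j), (D.hzb j).2 n hn]
  simp only [mul_assoc]

lemma aj_mem {a : R} (ha : a ∈ D.A) (j) : D.aj a j ∈ D.A := by
  refine op_mem_A ?_ (aj_right ha j) ?_
  · intro x hx
    exact D.hEM_mem _ (mul_mem (mul_mem (mem_A.1 ha).1 (D.hMM1 hx)) (D.hzb j).1)
  · intro x hx n hn
    simp only [LinearMap.comp_apply, LinearMap.mulRight_apply, LinearMap.mulLeft_apply]
    rw [← D.hEM_left n (D.hNM hn) _ (mul_mem (mul_mem (mem_A.1 ha).1 (D.hMM1 hx)) (D.hzb j).1),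
      ← mul_assoc, ← mul_assoc, (mem_A.1 ha).2 n hn]
    simp only [mul_assoc]

lemma aj_e1 {a m : R} (ha : a ∈ D.A) (j) (hm : m ∈ D.M) :
    D.aj a j * (m * D.e1) = D.EM (a * m * D.zb j) * D.e1 := by
  rw [← mul_assoc]; exact op_e1 (aj_right ha j) hm

lemma pair_sig {v y b : R} (hv : v ∈ D.V) (hb : b ∈ D.B) :
    D.pairL b (D.sig (D.winv * v) * y)
      = D.lam⁻¹ ^ 2 * D.T (D.sig v * (y * D.e2 * D.e1 * b)) := by
  have hwv := mul_mem D.winv_mem_V hv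
  have hu := (mem_U.1 (sig_mem (V_le_A hwv))).1
  have hu' := (mem_U.1 (sig_mem (V_le_A hv))).1
  have hc : D.e1 * (D.w * (b * D.sig (D.winv * v))) = D.e1 * (b * D.sig v) := by
    calc _ = D.e1 * D.sig (D.winv * v) * D.w * b := by
          rw [mem_B.1 hb _ hu, ← mul_assoc D.w, (mem_V.1 D.w_mem_V).2 _ hu]
          simp only [mul_assoc]
      _ = D.e1 * v * b := by rw [e1_sig hwv, mul_assoc D.e1, winv_comm hv]
      _ = _ := by rw [← e1_sig hv, mem_B.1 hb _ hu', mul_assoc]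
  rw [pairL_apply]
  congr 1
  rw [mul_assoc _ y, mul_assoc _ (y * _), mul_assoc _ (_ * D.e1), mul_assoc _ (_ * D.w),
    D.hT_tr, D.hT_tr (D.sig v)]
  simp only [mul_assoc, hc]

lemma sig_P_aj {a g : R} (ha : a ∈ D.A) (hg : g ∈ D.A) (j) :
    D.sig (D.P (D.aj a j * g)) = ∑ i, D.xb i * D.EM (a * D.act g (D.yb i) * D.zb j) := by
  have hact := fun i => act_mem (mem_A.1 hg).1 (D.hyb i)
  refine sig_eq (P_mem_V (mul_mem (aj_mem ha j) hg)) (sum_mem fun i _ => mul_mem (D.hxb i)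
    (D.hEM_mem _ (mul_mem (mul_mem (mem_A.1 ha).1 (D.hMM1 (hact i))) (D.hzb j).1))) ?_
  rw [P, Finset.sum_mul, Finset.sum_mul]
  refine Finset.sum_congr rfl fun i _ => ?_
  rw [mul_assoc _ (D.EM _), ← aj_e1 ha j (hact i), act_e1 (mem_A.1 hg).1 (D.hyb i)]
  simp only [mul_assoc]

/-- The explicit form of `Δ_A(a)`, tested against `B ⊗ B`. -/
lemma cop_pair {a b b' : R} (ha : a ∈ D.A) (hb : b ∈ D.B) (hb' : b' ∈ D.B) :
    ∑ j, ∑ l, D.pairL b (D.f1 l * D.aj a j) * D.pairL b' (D.sig (D.f2 l) * D.wb j)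
      = D.pairL (b * b') a := by
  obtain ⟨g, hg, hge⟩ : ∃ g ∈ D.A, D.e2 * g = D.e2 * (D.e1 * D.w * b) := by
    refine ⟨D.lam⁻¹ • D.EM1 (D.e2 * (D.e1 * D.w * b)), Subalgebra.smul_mem _ (EM1_mem_A
      (mul_mem (B_le_C D.e2_mem_B) (mul_mem (mul_mem (A_le_C D.e1_mem_A)
        (A_le_C (V_le_A D.w_mem_V))) (B_le_C hb)))) _, ?_⟩
    rw [mul_smul_comm, ← D.hPP2']
  have hact := fun i => act_mem (mem_A.1 hg).1 (D.hyb i)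
  have h1 : ∀ j l, D.pairL b (D.f1 l * D.aj a j) = D.T (D.f1 l * D.P (D.aj a j * g)) := by
    intro j l
    have hf := (mem_V.1 (D.f1_mem_V l)).1
    have hj := (mem_A.1 (aj_mem ha j)).1
    have e : D.f1 l * D.aj a j * D.e2 * D.e1 * D.w * b
        = D.f1 l * D.aj a j * (D.e2 * g) := by rw [hge]; simp only [mul_assoc]
    rw [pairL_apply, e, ← D.hTEM1, EM1_e2 (mul_mem hf hj) (mem_A.1 hg).1, map_smul, smul_eq_mul,
      D.hT_tr (D.f1 l), T_P _ (V_le_B (D.f1_mem_V l)), mul_assoc, D.hT_tr (D.f1 l), pow_two,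
      mul_assoc, inv_mul_cancel_left₀ D.lam_ne]
  have h2 : ∀ j, ∑ l, D.pairL b (D.f1 l * D.aj a j) * D.pairL b' (D.sig (D.f2 l) * D.wb j)
      = D.lam⁻¹ ^ 2 * D.T (D.sig (D.P (D.aj a j * g)) * D.wb j * (D.e2 * D.e1 * b')) := by
    intro j
    have hv := P_mem_V (mul_mem (aj_mem ha j) hg)
    have := pair_sig (y := D.wb j) hv hb'
    rw [← V_dual hv] at this
    simp only [map_sum, Finset.sum_mul, map_smul, smul_mul_assoc, smul_eq_mul] at this
    rw [Finset.sum_congr rfl fun l _ => by rw [h1 j l], this]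
    simp only [mul_assoc]
  have h3 : ∑ j, D.sig (D.P (D.aj a j * g)) * D.wb j
      = ∑ i, D.xb i * (a * D.act g (D.yb i)) := by
    simp only [sig_P_aj ha hg, Finset.sum_mul]
    rw [Finset.sum_comm]
    refine Finset.sum_congr rfl fun i _ => ?_
    conv_rhs => rw [← D.hdualA1 _ (mul_mem (mem_A.1 ha).1 (D.hMM1 (hact i))), Finset.mul_sum]
    simp only [mul_assoc]
  have h4 : (∑ i, D.xb i * (a * D.act g (D.yb i))) * (D.e2 * D.e1 * b')
      = D.P (a * D.e2 * g) * (D.e1 * b') := by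
    rw [P, Finset.sum_mul, Finset.sum_mul]
    refine Finset.sum_congr rfl fun i _ => ?_
    calc _ = D.xb i * a * (D.act g (D.yb i) * D.e2) * D.e1 * b' := by simp only [mul_assoc]
      _ = D.xb i * a * D.e2 * (D.act g (D.yb i) * D.e1) * b' := by
        rw [← D.he2_M _ (hact i)]; simp only [mul_assoc]
      _ = _ := by rw [act_e1 (mem_A.1 hg).1 (D.hyb i)]; simp only [mul_assoc]
  have hZ : a * D.e2 * g ∈ D.C := mul_mem (mul_mem (A_le_C ha) (B_le_C D.e2_mem_B)) (A_le_C hg)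
  rw [Finset.sum_congr rfl fun j _ => h2 j, ← Finset.mul_sum, ← map_sum, ← Finset.sum_mul, h3, h4,
    pairL_apply, ← mul_assoc, D.hT_tr, ← mul_assoc, T_e1 (mul_mem hb' (P_mem_B hZ)), D.hT_tr,
    T_P _ hb', mul_inv_cancel_left₀ D.lam_ne, mul_assoc a, hge]
  simp only [mul_assoc]

/-! ### The action in closed form -/

lemma sum_act {a m : R} (ha : a ∈ D.A) (hm : m ∈ D.M) :
    ∑ j, ∑ l, D.f1 l * D.aj a j * m * (D.winv * D.S0 (D.sig (D.f2 l) * D.wb j) * D.w)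
      = D.act a m := by
  refine ext_e1 (D := D) fun m' hm' => ?_
  have hU : ∀ {v}, v ∈ D.V → D.sig v ∈ D.M := fun hv => (mem_U.1 (sig_mem (V_le_A hv))).1
  have hω := hU D.w_mem_V
  have hθ := hU D.winv_mem_V
  have ha1 := (mem_A.1 ha).1
  have hem : D.e1 * m' ∈ D.M1 := mul_mem D.he1_mem (D.hMM1 hm')
  let φ : R →ₗ[k] R →ₗ[k] R := ((LinearMap.mul k R).compl₁₂
    (LinearMap.mulRight k (D.sig D.winv) ∘ₗ LinearMap.mulLeft k (a * m) ∘ₗ D.EM ∘ₗ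
      LinearMap.mulLeft k (D.e1 * m')) LinearMap.id).compr₂ D.EM
  have hφ : ∀ x y, φ x y = D.EM (a * m * D.EM (D.e1 * m' * x) * D.sig D.winv * y) := by
    intro x y
    simp [φ, mul_assoc]
  have h1 : ∀ j l, D.f1 l * D.aj a j * m * (D.winv * D.S0 (D.sig (D.f2 l) * D.wb j) * D.w)
      * m' * D.e1 = D.lam⁻¹ • φ (D.qq (j, l)) (D.pp (j, l)) * D.e1 := by
    intro j l
    have hf1 := hU (D.f1_mem_V l)
    have hq : D.sig (D.f2 l) * D.wb j ∈ D.A :=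
      mul_mem (U_le_A (sig_mem (V_le_A (D.f2_mem_V l)))) (D.wb_mem_A j)
    have hEX := D.hEM_mem _ (mul_mem (mul_mem D.he1_mem (D.hMM1 (mul_mem hm' hω)))
      (mem_A.1 hq).1)
    have hX := Subalgebra.smul_mem D.M hEX D.lam⁻¹
    set X := D.EM (D.e1 * (m' * D.sig D.w) * (D.sig (D.f2 l) * D.wb j)) with hXdef
    have hY := mul_mem hm (mul_mem hX hθ)
    have hYz : a * (m * (D.lam⁻¹ • X * D.sig D.winv)) * D.zb j ∈ D.M1 :=
      mul_mem (mul_mem ha1 (D.hMM1 hY)) (D.hzb j).1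
    calc _ = D.f1 l * (D.aj a j * (m * (D.winv * (D.S0 (D.sig (D.f2 l) * D.wb j)
            * (D.w * (m' * D.e1)))))) := by simp only [mul_assoc]
      _ = D.f1 l * (D.aj a j * (m * (D.lam⁻¹ • X * D.sig D.winv) * D.e1)) := by
        rw [V_mul_e1 D.w_mem_V hm', ← mul_assoc (D.S0 _), S0_e1 hq (mul_mem hm' hω),
          V_mul_e1 D.winv_mem_V hX]
        simp only [mul_assoc]
      _ = D.EM (a * (m * (D.lam⁻¹ • X * D.sig D.winv)) * D.zb j) * D.sig (D.f1 l) * D.e1 := by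
        rw [aj_e1 ha j hY, V_mul_e1 (D.f1_mem_V l) (D.hEM_mem _ hYz)]
      _ = _ := by
        rw [← D.hEM_right _ hf1 _ hYz, hφ, qq, pp, ← sig_w_comm (D.f2_mem_V l)]
        congr 1
        simp only [hXdef, mul_assoc, smul_mul_assoc, mul_smul_comm, map_smul]
  have h2 : ∀ j, ∑ l, φ (D.pp (j, l)) (D.qq (j, l))
      = D.EM (a * m * (D.EM (D.e1 * m' * D.zb j) * D.wb j)) := by
    intro j
    have h3 : ∀ l, φ (D.pp (j, l)) (D.qq (j, l))
        = D.EM (a * m * (D.EM (D.e1 * m' * D.zb j) * (D.sig (D.f1 l) * D.sig (D.f2 l))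
          * D.wb j)) := by
      intro l
      rw [hφ, pp, qq, ← mul_assoc _ (D.zb j), D.hEM_right _ (hU (D.f1_mem_V l)) _
        (mul_mem hem (D.hzb j).1)]
      conv_rhs => rw [← sig_winv_cancel (D.f2_mem_V l)]
      simp only [mul_assoc]
    rw [Finset.sum_congr rfl fun l _ => h3 l, ← map_sum, ← Finset.mul_sum, ← Finset.sum_mul,
      ← Finset.mul_sum, sig_f_one, mul_one]
  have h4 : ∑ j, ∑ l, φ (D.qq (j, l)) (D.pp (j, l)) = D.EM (a * m * D.e1) * m' := by
    rw [← Fintype.sum_prod_type (f := fun α => φ (D.qq α) (D.pp α)), A_swap,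
      Fintype.sum_prod_type, Finset.sum_congr rfl fun j _ => h2 j, ← map_sum, ← Finset.mul_sum,
      D.hdualA1 _ hem, ← mul_assoc,
      D.hEM_right m' hm' _ (mul_mem (mul_mem ha1 (D.hMM1 hm)) D.he1_mem)]
  simp only [Finset.sum_mul]
  rw [Finset.sum_congr rfl fun j _ => Finset.sum_congr rfl fun l _ => h1 j l]
  simp only [← Finset.sum_mul, ← Finset.smul_sum]
  rw [h4, act, smul_mul_assoc D.lam⁻¹ _ m']

/-- The target counit of `A` is `a ↦ a ▷ 1`, with values in `U`. -/
lemma counit_sum {a : R} (ha : a ∈ D.A) :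
    ∑ l, D.pairL 1 (D.f1 l * a) • D.sig (D.f2 l) = D.act a 1 := by
  have hae := mul_mem ha D.e1_mem_A
  have hu : D.act a 1 ∈ D.U := by
    rw [act, mul_one]; exact Subalgebra.smul_mem _ (EM_mem_U hae) _
  conv_rhs => rw [← U_dual' hu]
  refine Finset.sum_congr rfl fun l _ => ?_
  congr 1
  have hf := D.f1_mem_V l
  have hwf := mul_mem D.w_mem_V hf
  have hM := (mem_U.1 (sig_mem (V_le_A hwf))).1
  have e1 : D.f1 l * a * D.e2 * D.e1 * D.w * 1
      = D.f1 l * a * (D.e2 * (D.e1 * D.w)) := by simp only [mul_assoc, mul_one]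
  rw [pairL_apply, e1, ← D.hTEM1, EM1_e2 (mul_mem (mem_V.1 hf).1 (mem_A.1 ha).1)
    (mul_mem D.he1_mem (mem_V.1 D.w_mem_V).1), map_smul, mul_assoc, D.hT_tr, ← sig_mul D.w_mem_V hf,
    D.hT_tr (D.sig _), act, mul_one, smul_mul_assoc, map_smul, ← D.hEM_right _ hM _ (mem_A.1 hae).1,
    D.hTEM _ (mul_mem (mem_A.1 hae).1 (D.hMM1 hM)), mul_assoc a D.e1 (D.sig _), e1_sig hwf,
    smul_eq_mul, smul_eq_mul, pow_two]
  simp only [mul_assoc]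
  rw [inv_mul_cancel_left₀ D.lam_ne]

/-- The explicit formula for `Δ_A(a)`. -/
noncomputable def cop (D : D2S k R) (a : R) : R ⊗[k] R :=
  ∑ j, ∑ l, (D.f1 l * D.aj a j) ⊗ₜ[k] (D.sig (D.f2 l) * D.wb j)

lemma cop_one : D.cop 1 = ∑ l, D.f1 l ⊗ₜ[k] D.sig (D.f2 l) := by
  have h : ∀ j, ∑ l, (D.f1 l * D.aj 1 j) ⊗ₜ[k] (D.sig (D.f2 l) * D.wb j)
      = ∑ l, D.f1 l ⊗ₜ[k] (D.sig (D.f2 l) * (D.EM (D.zb j) * D.wb j)) := by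
    intro j
    obtain ⟨v, hv, hσ⟩ := exists_sig (EM_mem_U (D.zb_mem_A j))
    have hav : D.aj 1 j = v := by
      refine ext_e1 (D := D) fun m hm => ?_
      rw [mul_assoc _ m, aj_e1 (one_mem _) j hm, mul_assoc v, V_mul_e1 hv hm, hσ, one_mul,
        D.hEM_left m hm _ (D.hzb j).1]
    have := congrArg (TensorProduct.map LinearMap.id
      (LinearMap.mulRight k (D.wb j) ∘ₗ D.sig)) (f_cas hv)
    simp only [map_sum, TensorProduct.map_tmul, LinearMap.id_apply, LinearMap.comp_apply,
      LinearMap.mulRight_apply] at this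
    rw [hav, this]
    refine Finset.sum_congr rfl fun l _ => ?_
    rw [sig_mul hv (D.f2_mem_V l), hσ, mul_assoc]
  rw [cop, Finset.sum_congr rfl fun j _ => h j, Finset.sum_comm]
  refine Finset.sum_congr rfl fun l _ => ?_
  rw [← TensorProduct.tmul_sum, ← Finset.mul_sum]
  have := D.hdualA1 1 (one_mem _)
  simp only [one_mul] at this
  rw [this, mul_one]

end D2S

/-! ### The structure maps of `A` dual to those of `B` -/

namespace D2H

open D2S

variable {k : Type*} [Field k] {R : Type*} [Ring R] [Algebra k R] {D : D2H k R}

lemma pr_eq (a b : R) : D.pr a b = D.toD2S.pairL b a := (pairL_apply a b).symm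

/-- The antipode of `A` is `a ↦ w⁻¹ S₀(a) w`. -/
lemma SA_eq {SA : R →ₗ[k] R}
    (hSA_mem : ∀ a ∈ D2.A D.toD2S.toD2, SA a ∈ D2.A D.toD2S.toD2)
    (hSA_dual : ∀ a ∈ D2.A D.toD2S.toD2, ∀ b ∈ D2.B D.toD2S.toD2,
      D.pr (SA a) b = D.pr a (D.S b)) {a : R} (ha : a ∈ D2.A D.toD2S.toD2) :
    SA a = D.winv * D.toD2S.S0 a * D.w := by
  have hw := V_le_A D.toD2S.w_mem_V
  have hS0 := S0_mem ha
  have ha' : D.winv * D.toD2S.S0 a * D.w ∈ D2.A D.toD2S.toD2 :=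
    mul_mem (mul_mem (V_le_A D.toD2S.winv_mem_V) hS0) hw
  refine pair_nondeg (hSA_mem a ha) ha' fun b hb => ?_
  have hSb : D.S b ∈ D2.B D.toD2S.toD2 := mem_B.2 (D.hS_mem b (mem_B.1 hb))
  have hwS : D.w * D.S b ∈ D2.B D.toD2S.toD2 := mul_mem (V_le_B D.toD2S.w_mem_V) hSb
  have h1 := D.hS_def _ (mem_A.1 ha').1 (mem_A.1 ha').2 b (mem_B.1 hb)
  rw [← pr_eq, hSA_dual a ha b hb, pairL_apply, h1, D2H.pr]
  congr 1
  have e1 : D.S b * D.e1 * D.e2 * D.w * (D.winv * D.toD2S.S0 a * D.w)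
      = D.S b * D.e1 * D.e2 * D.toD2S.S0 a * D.w := by
    calc _ = D.S b * D.e1 * D.e2 * (D.w * D.winv) * D.toD2S.S0 a * D.w := by
          simp only [mul_assoc]
      _ = _ := by rw [D.hw_inv.1, mul_one]
  have e2 : a * D.e2 * D.e1 * D.w * D.S b = a * D.e2 * D.e1 * (D.w * D.S b) := mul_assoc _ _ _
  have e3 : D.w * (D.S b * D.e1 * D.e2 * D.toD2S.S0 a)
      = D.w * D.S b * D.e1 * D.e2 * D.toD2S.S0 a := by simp only [mul_assoc]
  have e4 : D.w * D.S b * (a * D.e2 * D.e1) = D.w * D.S b * a * D.e2 * D.e1 := by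
    simp only [mul_assoc]
  rw [e1, e2, D.hT_tr _ D.w, D.hT_tr _ (D.w * D.S b), e3, e4, T_S0 ha hwS]

/-- The comultiplication of `A` in closed form. -/
lemma ΔA_eq {ΔA : R →ₗ[k] R ⊗[k] R}
    (hΔA_mem : ∀ a ∈ D2.A D.toD2S.toD2, ΔA a ∈ Submodule.span k
      {z : R ⊗[k] R | ∃ x ∈ D2.A D.toD2S.toD2, ∃ y ∈ D2.A D.toD2S.toD2,
        z = x ⊗ₜ[k] y})
    (hΔA_dual : ∀ a ∈ D2.A D.toD2S.toD2,
      ∀ (m : ℕ) (a1 a2 : Fin m → R), ΔA a = ∑ i, a1 i ⊗ₜ[k] a2 i →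
      ∀ b ∈ D2.B D.toD2S.toD2, ∀ b' ∈ D2.B D.toD2S.toD2,
        ∑ i, D.pr (a1 i) b * D.pr (a2 i) b' = D.pr a (b * b'))
    {a : R} (ha : a ∈ D2.A D.toD2S.toD2) : ΔA a = D.toD2S.cop a := by
  refine pair_nondeg_tensor (D := D.toD2S) (hΔA_mem a ha) ?_ fun b hb b' hb' => ?_
  · exact sum_mem fun j _ => sum_mem fun l _ => Submodule.subset_span
      ⟨_, mul_mem (V_le_A (D.toD2S.f1_mem_V l)) (aj_mem ha j), _,
        mul_mem (U_le_A (sig_mem (V_le_A (D.toD2S.f2_mem_V l)))) (D.toD2S.wb_mem_A j), rfl⟩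
  · obtain ⟨m, a1, a2, h⟩ := TensorProduct.exists_sum_tmul_eq (ΔA a)
    have h2 := hΔA_dual a ha m a1 a2 h b hb b' hb'
    simp only [pr_eq] at h2
    rw [h, cop]
    simp only [map_sum, TensorProduct.map_tmul, LinearMap.mul'_apply]
    rw [h2, cop_pair ha hb hb']

end D2H

/-- the map `a ⊳ m = a₍₁₎ m S_A(a₍₂₎)` (for `a ∈ A`, `m ∈ M`, with
`Δ_A` and `S_A` the comultiplication and antipode of the weak Hopf algebra `A`
dual to `B`) takes values in `M` and defines a left action of `A` on `M` making
`M` a left `A`-module algebra; moreover `M^A = N`. -/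
theorem stmt17 {k : Type*} [Field k] {R : Type*} [Ring R] [Algebra k R] (D : D2H k R)
    (ΔA : R →ₗ[k] R ⊗[k] R) (SA : R →ₗ[k] R)
    -- Δ_A maps A into A ⊗ A and is dual to the multiplication of B
    (hΔA_mem : ∀ a ∈ D2.A D.toD2S.toD2, ΔA a ∈ Submodule.span k
      {z : R ⊗[k] R | ∃ x ∈ D2.A D.toD2S.toD2, ∃ y ∈ D2.A D.toD2S.toD2,
        z = x ⊗ₜ[k] y})
    (hΔA_dual : ∀ a ∈ D2.A D.toD2S.toD2,
      ∀ (m : ℕ) (a1 a2 : Fin m → R), ΔA a = ∑ i, a1 i ⊗ₜ[k] a2 i →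
      ∀ b ∈ D2.B D.toD2S.toD2, ∀ b' ∈ D2.B D.toD2S.toD2,
        ∑ i, D.pr (a1 i) b * D.pr (a2 i) b' = D.pr a (b * b'))
    -- S_A maps A into A and is dual to the antipode of B
    (hSA_mem : ∀ a ∈ D2.A D.toD2S.toD2, SA a ∈ D2.A D.toD2S.toD2)
    (hSA_dual : ∀ a ∈ D2.A D.toD2S.toD2, ∀ b ∈ D2.B D.toD2S.toD2,
      D.pr (SA a) b = D.pr a (D.S b)) :
    -- the action takes values in M
    (∀ a ∈ D2.A D.toD2S.toD2, ∀ m ∈ D.M, actOf ΔA SA m a ∈ D.M) ∧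
    -- it is a left module action of A on M
    (∀ m ∈ D.M, actOf ΔA SA m 1 = m) ∧
    (∀ a ∈ D2.A D.toD2S.toD2, ∀ a' ∈ D2.A D.toD2S.toD2, ∀ m ∈ D.M,
      actOf ΔA SA m (a * a') = actOf ΔA SA (actOf ΔA SA m a') a) ∧
    -- the measuring axiom: a ⊳ (m m') = (a₍₁₎ ⊳ m)(a₍₂₎ ⊳ m')
    (∀ a ∈ D2.A D.toD2S.toD2, ∀ m ∈ D.M, ∀ m' ∈ D.M,
      actOf ΔA SA (m * m') a
        = LinearMap.mul' k R
            (TensorProduct.map (actOf ΔA SA m) (actOf ΔA SA m') (ΔA a))) ∧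
    -- the unit axiom: a ⊳ 1 = ε_t(a) ⊳ 1
    (∀ (m0 : ℕ) (o1 o2 : Fin m0 → R), ΔA 1 = ∑ j, o1 j ⊗ₜ[k] o2 j →
      ∀ a ∈ D2.A D.toD2S.toD2,
        actOf ΔA SA 1 a = ∑ j, D.pr (o1 j * a) 1 • actOf ΔA SA 1 (o2 j)) ∧
    -- the invariant subalgebra is M^A = N
    (∀ (m0 : ℕ) (o1 o2 : Fin m0 → R), ΔA 1 = ∑ j, o1 j ⊗ₜ[k] o2 j →
      ∀ x ∈ D.M,
        ((∀ a ∈ D2.A D.toD2S.toD2,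
            actOf ΔA SA x a = ∑ j, D.pr (o1 j * a) 1 • actOf ΔA SA x (o2 j)) ↔
          x ∈ D.N)) := by
  have hcop : ∀ a ∈ D2.A D.toD2S.toD2, ΔA a = D.toD2S.cop a := fun a ha =>
    D2H.ΔA_eq hΔA_mem hΔA_dual ha
  have hSA : ∀ a ∈ D2.A D.toD2S.toD2, SA a = D.winv * D.toD2S.S0 a * D.w := fun a ha =>
    D2H.SA_eq hSA_mem hSA_dual ha
  have hA1 : ∀ {a}, a ∈ D2.A D.toD2S.toD2 → a ∈ D.M1 := fun ha => (D2S.mem_A.1 ha).1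
  have hU : ∀ l, D.toD2S.sig (D.f2 l) ∈ D2.U D.toD2S.toD2 := fun l =>
    D2S.sig_mem (D2S.V_le_A (D.toD2S.f2_mem_V l))
  have hact : ∀ a ∈ D2.A D.toD2S.toD2, ∀ m ∈ D.M, actOf ΔA SA m a = D.toD2S.act a m := by
    intro a ha m hm
    rw [← D2S.sum_act ha hm, actOf, LinearMap.comp_apply, LinearMap.comp_apply, hcop a ha, D2S.cop]
    simp only [map_sum, TensorProduct.map_tmul, LinearMap.mul'_apply, LinearMap.mulRight_apply]
    refine Finset.sum_congr rfl fun j _ => Finset.sum_congr rfl fun l _ => ?_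
    rw [hSA _ (mul_mem (D2S.U_le_A (hU l)) (D.toD2S.wb_mem_A j))]
  -- an element of `U` acts by left multiplication
  have hactU : ∀ u ∈ D2.U D.toD2S.toD2, ∀ m ∈ D.M, actOf ΔA SA m u = u * m := by
    intro u hu m hm
    rw [hact u (D2S.U_le_A hu) m hm]
    exact D2S.act_eq (hA1 (D2S.U_le_A hu)) hm (mul_mem (D2S.mem_U.1 hu).1 hm) rfl
  have hcounit : ∀ (m0 : ℕ) (o1 o2 : Fin m0 → R), ΔA 1 = ∑ j, o1 j ⊗ₜ[k] o2 j →
      ∀ a ∈ D2.A D.toD2S.toD2, ∀ x ∈ D.M,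
        ∑ j, D.pr (o1 j * a) 1 • actOf ΔA SA x (o2 j) = D.toD2S.act a 1 * x := by
    intro m0 o1 o2 h a ha x hx
    -- the sum depends on the tensor `ΔA 1` only, so the legs `f1`, `σ(f2)` may be used
    have h1 := congrArg (TensorProduct.lift
      ((D.toD2S.pairL 1 ∘ₗ LinearMap.mulRight k a).smulRight (actOf ΔA SA x)))
      (h.symm.trans ((hcop 1 (one_mem _)).trans D2S.cop_one))
    simp only [map_sum, TensorProduct.lift.tmul, LinearMap.smulRight_apply,
      LinearMap.comp_apply, LinearMap.mulRight_apply, LinearMap.smul_apply] at h1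
    simp only [D2H.pr_eq]
    rw [h1, ← D2S.counit_sum ha, Finset.sum_mul]
    exact Finset.sum_congr rfl fun l _ => by rw [hactU _ (hU l) x hx, smul_mul_assoc]
  refine ⟨?_, ?_, ?_, ?_, ?_, ?_⟩
  · intro a ha m hm
    rw [hact a ha m hm]
    exact D2S.act_mem (hA1 ha) hm
  · intro m hm
    rw [hactU 1 (one_mem _) m hm, one_mul]
  · intro a ha a' ha' m hm
    have hm' := D2S.act_mem (hA1 ha') hm
    rw [hact _ (mul_mem ha ha') m hm, hact a' ha' m hm, hact a ha _ hm']
    refine D2S.act_eq (mul_mem (hA1 ha) (hA1 ha')) hm (D2S.act_mem (hA1 ha) hm') ?_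
    rw [D2S.act_e1 (hA1 ha) hm', mul_assoc, mul_assoc, mul_assoc a, D2S.act_e1 (hA1 ha') hm,
      mul_assoc]
  · intro a ha m hm m' hm'
    have hσ : ∀ l, D.toD2S.sig (D.f1 l) ∈ D.M := fun l =>
      (D2S.mem_U.1 (D2S.sig_mem (D2S.V_le_A (D.toD2S.f1_mem_V l)))).1
    have hEM : ∀ j, D.EM (a * m * D.zb j) ∈ D.M := fun j =>
      D.hEM_mem _ (mul_mem (mul_mem (hA1 ha) (D.hMM1 hm)) (D.hzb j).1)
    have h1 : ∀ j l, actOf ΔA SA m (D.f1 l * D.toD2S.aj a j)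
        * actOf ΔA SA m' (D.toD2S.sig (D.f2 l) * D.wb j)
        = D.EM (a * m * D.zb j) * (D.toD2S.sig (D.f1 l) * D.toD2S.sig (D.f2 l))
          * D.toD2S.act (D.wb j) m' := by
      intro j l
      have hf := D2S.V_le_A (D.toD2S.f1_mem_V l)
      have hw := D2S.act_mem (D.hwb j).1 hm'
      have hfj := mul_mem hf (D2S.aj_mem ha j)
      have huw := mul_mem (D2S.U_le_A (hU l)) (D.toD2S.wb_mem_A j)
      have e1 : D.toD2S.act (D.f1 l * D.toD2S.aj a j) m
          = D.EM (a * m * D.zb j) * D.toD2S.sig (D.f1 l) := by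
        refine D2S.act_eq (hA1 hfj) hm (mul_mem (hEM j) (hσ l)) ?_
        rw [mul_assoc, mul_assoc, D2S.aj_e1 ha j hm,
          D2S.V_mul_e1 (D.toD2S.f1_mem_V l) (hEM j)]
      have e2 : D.toD2S.act (D.toD2S.sig (D.f2 l) * D.wb j) m'
          = D.toD2S.sig (D.f2 l) * D.toD2S.act (D.wb j) m' := by
        refine D2S.act_eq (hA1 huw) hm' (mul_mem (D2S.mem_U.1 (hU l)).1 hw) ?_
        rw [mul_assoc _ (D.toD2S.act _ _), D2S.act_e1 (D.hwb j).1 hm']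
        simp only [mul_assoc]
      rw [hact _ hfj m hm, hact _ huw m' hm', e1, e2]
      simp only [mul_assoc]
    have h2 : ∀ j, ∑ l, actOf ΔA SA m (D.f1 l * D.toD2S.aj a j)
        * actOf ΔA SA m' (D.toD2S.sig (D.f2 l) * D.wb j)
        = D.EM (a * m * D.zb j) * D.toD2S.act (D.wb j) m' := by
      intro j
      rw [Finset.sum_congr rfl fun l _ => h1 j l, ← Finset.sum_mul, ← Finset.mul_sum,
        D2S.sig_f_one, mul_one]
    rw [hact a ha _ (mul_mem hm hm'), hcop a ha, D2S.cop]
    simp only [map_sum, TensorProduct.map_tmul, LinearMap.mul'_apply]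
    rw [Finset.sum_congr rfl fun j _ => h2 j]
    have ham := mul_mem (hA1 ha) (D.hMM1 hm)
    refine D2S.act_eq (hA1 ha) (mul_mem hm hm')
      (sum_mem fun j _ => mul_mem (hEM j) (D2S.act_mem (D.hwb j).1 hm')) ?_
    rw [Finset.sum_mul, ← mul_assoc a]
    conv_lhs => rw [← D.hdualA1 (a * m) ham]
    rw [Finset.sum_mul, Finset.sum_mul]
    refine Finset.sum_congr rfl fun j _ => ?_
    rw [mul_assoc _ (D.toD2S.act _ _), D2S.act_e1 (D.hwb j).1 hm']
    simp only [mul_assoc]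
  · intro m0 o1 o2 h a ha
    rw [hcounit m0 o1 o2 h a ha 1 (one_mem _), hact a ha 1 (one_mem _), mul_one]
  · intro m0 o1 o2 h x hx
    constructor
    · intro hinv
      -- `e₁` acts on `M` as the conditional expectation `E`
      have he : ∀ m ∈ D.M, D.toD2S.act D.e1 m = D.E m := fun m hm =>
        D2S.act_eq D.he1_mem hm (D.hNM (D.hE_mem m hm)) (D2S.e1_mul_e1 hm)
      have h1 := hinv D.e1 D.toD2S.e1_mem_A
      rw [hcounit m0 o1 o2 h _ D.toD2S.e1_mem_A x hx, hact _ D.toD2S.e1_mem_A x hx, he x hx,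
        he 1 (one_mem _), D.hE_one, one_mul] at h1
      rw [← h1]
      exact D.hE_mem x hx
    · intro hxN a ha
      rw [hcounit m0 o1 o2 h a ha x hx, hact a ha x hx]
      refine D2S.act_eq (hA1 ha) hx (mul_mem (D2S.act_mem (hA1 ha) (one_mem _)) hx) ?_
      rw [mul_assoc a, ← D.he1_N x hxN, mul_assoc (D.toD2S.act a 1) x, ← D.he1_N x hxN, ← mul_assoc,
        ← mul_assoc, D2S.act_e1 (hA1 ha) (one_mem _), mul_one]
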